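/- arXiv:1910.09050 — 2 statements merged into one kernel-verified Lean document; each statement's English description precedes it below -/
import Mathlib

section
/- Let (X_V, T) be a rank-one subshift with unbounded spacer parameter. Then for every x ∈ X_V with x ≠ 1^ℤ, the orbit {T^k x : k ∈ ℤ} is dense in X_V. -/
/-!
Every `v m` with `m ≥ n` is a concatenation of copies of `v n` and letters `1`, so every `0` of the
infinite word `V` lies inside an occurrence of `v n` in `V`. If `x ∈ XV V` has a `0` at position `i`,
the window of radius `|v n|` around `i` occurs in `V`, and the copy of `v n` covering that `0` fits
inside the window; hence every `v n`, i.e. every initial segment of `V`, occurs in `x`. A finite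
window of `z ∈ XV V` is a subword of `V`, so it is a subword of some `v n` because `|v n| → ∞`, and
therefore occurs in `x`: some translate of `x` agrees with `z` on that window.
-/


/-- The shift map on bi-infinite sequences: `(shiftZ x) k = x (k+1)`. -/
def shiftZ {α : Type*} (x : ℤ → α) : ℤ → α := fun k => x (k + 1)

/-- `(q, a, v)` is a rank-one construction sequence: `q` is the cutting parameter
(each `q n > 1`), `a` is the spacer parameter (the relevant values are `a n i` for
`1 ≤ i < q n`), `v 0 = 0`, and
`v (n+1) = v n 1^{a n 1} v n 1^{a n 2} ⋯ v n 1^{a n (q n − 1)} v n`. -/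
def IsRankOneSeq (q : ℕ → ℕ) (a : ℕ → ℕ → ℕ) (v : ℕ → List (Fin 2)) : Prop :=
  (∀ n, 1 < q n) ∧ v 0 = [0] ∧
    ∀ n, v (n + 1) = v n ++
      (List.ofFn fun i : Fin (q n - 1) =>
        List.replicate (a n (i.1 + 1)) 1 ++ v n).flatten

/-- `V` is the infinite rank-one word: every `v n` is an initial segment of `V`. -/
def IsLimitWord (v : ℕ → List (Fin 2)) (V : ℕ → Fin 2) : Prop :=
  ∀ (n k : ℕ) (h : k < (v n).length), V k = (v n).get ⟨k, h⟩

/-- The rank-one subshift determined by the infinite rank-one word `V`: the set of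
all bi-infinite binary words all of whose finite subwords occur in `V`. -/
def XV (V : ℕ → Fin 2) : Set (ℤ → Fin 2) :=
  {x | ∀ (i : ℤ) (m : ℕ), ∃ t : ℕ, ∀ k : ℕ, k < m → x (i + (k : ℤ)) = V (t + k)}

/-- The spacer parameter is bounded. -/
def BoundedSpacer (q : ℕ → ℕ) (a : ℕ → ℕ → ℕ) : Prop :=
  ∃ B, ∀ n i, 1 ≤ i → i < q n → a n i ≤ B

/-- The spacer parameter is unbounded. -/
def UnboundedSpacer (q : ℕ → ℕ) (a : ℕ → ℕ → ℕ) : Prop :=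
  ∀ B, ∃ n i, 1 ≤ i ∧ i < q n ∧ B < a n i

/-- Every position of `w` carrying the letter `0` lies in an occurrence of `u` in `w`. Occurrences
are expressed through `getElem?`, so that an equation at `k < u.length` also says that `s + k` is a
valid position of `w`. -/
def ZerosCovered (u w : List (Fin 2)) : Prop :=
  ∀ p, w[p]? = some 0 →
    ∃ s, s ≤ p ∧ p < s + u.length ∧ ∀ k, k < u.length → w[s + k]? = u[k]?

theorem ZerosCovered.refl (u : List (Fin 2)) : ZerosCovered u u := by
  intro p hp
  have hlt := (List.getElem?_eq_some_iff.1 hp).1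
  exact ⟨0, by omega, by omega, fun k _ => by simp⟩

theorem ZerosCovered.append {u w w' : List (Fin 2)} (h : ZerosCovered u w)
    (h' : ZerosCovered u w') : ZerosCovered u (w ++ w') := by
  intro p hp
  by_cases hlt : p < w.length
  · rw [List.getElem?_append_left hlt] at hp
    obtain ⟨s, h1, h2, h3⟩ := h p hp
    refine ⟨s, h1, h2, fun k hk => ?_⟩
    have e := h3 k hk
    rw [List.getElem?_eq_getElem hk] at e
    rw [List.getElem?_append_left (List.getElem?_eq_some_iff.1 e).1, h3 k hk]
  · rw [List.getElem?_append_right (by omega)] at hp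
    obtain ⟨s, h1, h2, h3⟩ := h' _ hp
    refine ⟨w.length + s, by omega, by omega, fun k hk => ?_⟩
    rw [List.getElem?_append_right (by omega), ← h3 k hk]
    congr 1
    omega

theorem ZerosCovered.replicate (u : List (Fin 2)) (b : ℕ) :
    ZerosCovered u (List.replicate b 1) := by
  intro p hp
  simp [List.getElem?_replicate] at hp

theorem ZerosCovered.flatten {u : List (Fin 2)} {l : List (List (Fin 2))}
    (h : ∀ w ∈ l, ZerosCovered u w) : ZerosCovered u l.flatten := by
  induction l with
  | nil => intro p hp; simp at hp
  | cons w l ih =>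
    rw [List.flatten_cons]
    exact (h w (by simp)).append (ih fun w' hw' => h w' (by simp [hw']))

theorem IsRankOneSeq.zerosCovered {q : ℕ → ℕ} {a : ℕ → ℕ → ℕ} {v : ℕ → List (Fin 2)}
    (hv : IsRankOneSeq q a v) {n m : ℕ} (hnm : n ≤ m) : ZerosCovered (v n) (v m) := by
  induction m, hnm using Nat.le_induction with
  | base => exact ZerosCovered.refl _
  | succ m _ ih =>
    rw [hv.2.2 m]
    refine ih.append (ZerosCovered.flatten fun w hw => ?_)
    obtain ⟨i, rfl⟩ := (List.mem_ofFn' _ _).1 hw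
    exact (ZerosCovered.replicate _ _).append ih

theorem IsRankOneSeq.lt_length {q : ℕ → ℕ} {a : ℕ → ℕ → ℕ} {v : ℕ → List (Fin 2)}
    (hv : IsRankOneSeq q a v) (n : ℕ) : n < (v n).length := by
  induction n with
  | zero => simp [hv.2.1]
  | succ n ih =>
    obtain ⟨r, hr⟩ : ∃ r, q n - 1 = r + 1 := ⟨q n - 2, by have := hv.1 n; omega⟩
    rw [hv.2.2 n, hr, List.ofFn_succ, List.flatten_cons]
    simp only [List.length_append]
    omega

theorem IsLimitWord.getElem? {v : ℕ → List (Fin 2)} {V : ℕ → Fin 2} (hV : IsLimitWord v V)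
    {n k : ℕ} (h : k < (v n).length) : (v n)[k]? = some (V k) := by
  rw [List.getElem?_eq_getElem h, hV n k h, List.get_eq_getElem]

/-- Every `0` of `V` lies in an occurrence of `v n` in `V`. As `v n` is an initial segment of `V`,
the occurrence is stated as a repetition of the first `|v n|` letters of `V`. -/
theorem IsRankOneSeq.exists_occurrence {q : ℕ → ℕ} {a : ℕ → ℕ → ℕ} {v : ℕ → List (Fin 2)}
    (hv : IsRankOneSeq q a v) {V : ℕ → Fin 2} (hV : IsLimitWord v V) (n : ℕ) {p : ℕ}
    (hp : V p = 0) :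
    ∃ s, s ≤ p ∧ p < s + (v n).length ∧ ∀ k, k < (v n).length → V (s + k) = V k := by
  have hlen : p < (v (max n p)).length := (le_max_right n p).trans_lt (hv.lt_length _)
  obtain ⟨s, h1, h2, h3⟩ := hv.zerosCovered (le_max_left n p) p (by rw [hV.getElem? hlen, hp])
  refine ⟨s, h1, h2, fun k hk => ?_⟩
  have e := h3 k hk
  rw [hV.getElem? hk] at e
  rw [hV.getElem? (List.getElem?_eq_some_iff.1 e).1] at e
  exact Option.some.inj e

/-- Every `v n` occurs in every element of `XV V` that has a `0`. -/
theorem IsRankOneSeq.exists_occurrence_of_mem {q : ℕ → ℕ} {a : ℕ → ℕ → ℕ}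
    {v : ℕ → List (Fin 2)} (hv : IsRankOneSeq q a v) {V : ℕ → Fin 2} (hV : IsLimitWord v V)
    {x : ℤ → Fin 2} (hx : x ∈ XV V) {i : ℤ} (hi : x i = 0) (n : ℕ) :
    ∃ c : ℤ, ∀ k : ℕ, k < (v n).length → x (c + k) = V k := by
  obtain ⟨t, ht⟩ := hx (i - (v n).length) (2 * (v n).length)
  have hpos := hv.lt_length n
  have h0 : V (t + (v n).length) = 0 := by
    rw [← ht _ (by omega), ← hi]
    congr 1
    omega
  obtain ⟨s, h1, h2, h3⟩ := hv.exists_occurrence hV n h0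
  refine ⟨i - (v n).length + (s - t), fun k hk => ?_⟩
  -- Since `t < s ≤ t + |v n|`, the occurrence at `s` stays inside the window starting at `t`.
  have e := ht (s - t + k) (by omega)
  rw [show t + (s - t + k) = s + k by omega, h3 k hk] at e
  rw [← e]
  congr 1
  omega

/-- Let `(X_V, T)` be a rank-one subshift with unbounded spacer parameter.  Then
for every `x ∈ X_V` with `x ≠ 1^ℤ`, the orbit `{T^k x : k ∈ ℤ}` is dense in
`X_V`. -/
theorem rank_one_unbounded_orbit_dense
    (q : ℕ → ℕ) (a : ℕ → ℕ → ℕ) (v : ℕ → List (Fin 2)) (hv : IsRankOneSeq q a v)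
    (hubdd : UnboundedSpacer q a)
    (V : ℕ → Fin 2) (hV : IsLimitWord v V) :
    ∀ x ∈ XV V, x ≠ (fun _ : ℤ => (1 : Fin 2)) → ∀ z ∈ XV V,
      z ∈ closure {y : ℤ → Fin 2 | ∃ k : ℤ, ∀ j : ℤ, y j = x (j + k)} := by
  intro x hx hx1 z hz
  obtain ⟨i, hi⟩ := Function.ne_iff.1 hx1
  have hi0 : x i = 0 := by omega
  rw [mem_closure_iff]
  intro U hU hzU
  obtain ⟨I, u, hu, hsub⟩ := isOpen_pi_iff.1 hU z hzU
  have hM : ∀ j ∈ I, j.natAbs ≤ I.sup Int.natAbs := fun j hj => Finset.le_sup hj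
  generalize I.sup Int.natAbs = M at hM
  obtain ⟨t, ht⟩ := hz (-M) (2 * M + 1)
  obtain ⟨c, hc⟩ := hv.exists_occurrence_of_mem hV hx hi0 (t + (2 * M + 1))
  have hlen := hv.lt_length (t + (2 * M + 1))
  refine ⟨fun j => x (j + (c + t + M)), hsub fun j hj => ?_, c + t + M, fun _ => rfl⟩
  have hjM := hM j hj
  obtain ⟨k, hk⟩ : ∃ k : ℕ, j = -M + k := ⟨(j + M).toNat, by omega⟩
  have e : x (j + (c + t + M)) = z j := by
    rw [hk, ht k (by omega), ← hc (t + k) (by omega)]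
    congr 1
    push_cast
    ring
  change x (j + (c + t + M)) ∈ u j
  rw [e]
  exact (hu j hj).2
end

section
/- Let (X_V, T) be a rank-one subshift with unbounded spacer parameter. Then an element x ∈ X_V contains an infinite string of 1s (i.e., there is K with x(k) = 1 for all k ≥ K, or there is K with x(k) = 1 for all k ≤ K) if and only if x belongs to the set S = {1^ℤ} ∪ {z_K : K ∈ ℤ} ∪ {z*_K : K ∈ ℤ}. -/
/-- The element `z_K` of `{0,1}^ℤ`: all `1`s before coordinate `K`, and a copy of
the infinite rank-one word `V` starting at coordinate `K`. -/
def zWord (V : ℕ → Fin 2) (K : ℤ) : ℤ → Fin 2 :=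
  fun k => if k < K then 1 else V (k - K).toNat

/-- `Vs` represents the dual infinite rank-one word `V*` (defined on `−ℕ`), via
`V*(−k) = Vs k`: `V*(−k) = v n (lh(v n) − k − 1)` whenever `k < lh(v n)`. -/
def IsDualLimitWord (v : ℕ → List (Fin 2)) (Vs : ℕ → Fin 2) : Prop :=
  ∀ (n k : ℕ) (h : k < (v n).length),
    Vs k = (v n).get ⟨(v n).length - k - 1, by omega⟩

/-- The element `z*_K` of `{0,1}^ℤ`: all `1`s after coordinate `K`, and a copy of
the dual infinite rank-one word `V*` ending at coordinate `K`. -/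
def zStarWord (Vs : ℕ → Fin 2) (K : ℤ) : ℤ → Fin 2 :=
  fun k => if K < k then 1 else Vs (K - k).toNat

/-- Every `0` of the word `w` lies in an occurrence of the word `u` in `w`. -/
def CoveredBy (u w : List (Fin 2)) : Prop :=
  ∀ p, w[p]? = some 0 →
    ∃ b c, w = b ++ u ++ c ∧ b.length ≤ p ∧ p < b.length + u.length

lemma coveredBy_self (u : List (Fin 2)) : CoveredBy u u := by
  intro p hp
  obtain ⟨h, -⟩ := List.getElem?_eq_some_iff.mp hp
  exact ⟨[], [], by simp, by simp, by simpa using h⟩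

lemma coveredBy_append {u w₁ w₂ : List (Fin 2)} (h₁ : CoveredBy u w₁) (h₂ : CoveredBy u w₂) :
    CoveredBy u (w₁ ++ w₂) := by
  intro p hp
  rcases lt_or_ge p w₁.length with h | h
  · rw [List.getElem?_append_left h] at hp
    obtain ⟨b, c, hw, hb, hc⟩ := h₁ p hp
    exact ⟨b, c ++ w₂, by simp [hw], hb, hc⟩
  · rw [List.getElem?_append_right h] at hp
    obtain ⟨b, c, hw, hb, hc⟩ := h₂ _ hp
    refine ⟨w₁ ++ b, c, by simp [hw], ?_, ?_⟩ <;> simp only [List.length_append] <;> omega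

lemma coveredBy_replicate_one (u : List (Fin 2)) (m : ℕ) :
    CoveredBy u (List.replicate m 1) := by
  intro p hp
  simp [List.getElem?_replicate] at hp

lemma coveredBy_flatten {u : List (Fin 2)} (L : List (List (Fin 2)))
    (h : ∀ w ∈ L, CoveredBy u w) : CoveredBy u L.flatten := by
  induction L with
  | nil => intro p hp; simp at hp
  | cons w L ih =>
    rw [List.flatten_cons]
    exact coveredBy_append (h w (by simp)) (ih fun w' hw' => h w' (by simp [hw']))

lemma append_flatten_ends_zero (L : List (List (Fin 2))) (w : List (Fin 2))
    (hw : ∃ c, w = c ++ [0]) (h : ∀ u ∈ L, ∃ c, u = c ++ [0]) :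
    ∃ c, w ++ L.flatten = c ++ [0] := by
  induction L generalizing w with
  | nil => simpa using hw
  | cons u L ih =>
    obtain ⟨c, hc⟩ := h u (by simp)
    rw [List.flatten_cons, ← List.append_assoc]
    exact ih _ ⟨w ++ c, by simp [hc]⟩ fun u' hu' => h u' (by simp [hu'])

section RankOne

variable {q : ℕ → ℕ} {a : ℕ → ℕ → ℕ} {v : ℕ → List (Fin 2)}

lemma rankOne_starts_zero (hv : IsRankOneSeq q a v) (n : ℕ) : ∃ c, v n = 0 :: c := by
  induction n with
  | zero => exact ⟨[], hv.2.1⟩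
  | succ n ih =>
    obtain ⟨c, hc⟩ := ih
    exact ⟨_, by rw [hv.2.2 n, hc, List.cons_append]⟩

lemma rankOne_ends_zero (hv : IsRankOneSeq q a v) (n : ℕ) : ∃ c, v n = c ++ [0] := by
  induction n with
  | zero => exact ⟨[], hv.2.1⟩
  | succ n ih =>
    rw [hv.2.2 n]
    refine append_flatten_ends_zero _ _ ih fun u hu => ?_
    obtain ⟨i, rfl⟩ := (List.mem_ofFn' _ _).mp hu
    obtain ⟨c, hc⟩ := ih
    exact ⟨List.replicate (a n (i.1 + 1)) 1 ++ c, by simp only [hc, List.append_assoc]⟩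

lemma rankOne_lt_length (hv : IsRankOneSeq q a v) (n : ℕ) : n < (v n).length := by
  induction n with
  | zero => simp [hv.2.1]
  | succ n ih =>
    obtain ⟨m, hm⟩ : ∃ m, q n - 1 = m + 1 := ⟨q n - 2, by have := hv.1 n; omega⟩
    rw [hv.2.2 n, hm, List.ofFn_succ]
    simp only [List.flatten_cons, List.length_append]
    omega

lemma rankOne_coveredBy (hv : IsRankOneSeq q a v) (n d : ℕ) : CoveredBy (v n) (v (n + d)) := by
  induction d with
  | zero => exact coveredBy_self _
  | succ d ih =>
    rw [← add_assoc, hv.2.2 (n + d)]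
    refine coveredBy_append ih (coveredBy_flatten _ fun w hw => ?_)
    obtain ⟨i, rfl⟩ := (List.mem_ofFn' _ _).mp hw
    exact coveredBy_append (coveredBy_replicate_one _ _) ih

lemma limitWord_getElem? {V : ℕ → Fin 2} (hV : IsLimitWord v V) {n k : ℕ}
    (h : k < (v n).length) : (v n)[k]? = some (V k) := by
  rw [hV n k h, List.getElem?_eq_getElem h, List.get_eq_getElem]

/-- Every `0` of `V` lies in a copy of `v n`; as `v n` is an initial segment of `V`, the copy is
expressed as a window on which `V` agrees with its own beginning. -/
lemma limit_cover (hv : IsRankOneSeq q a v) {V : ℕ → Fin 2} (hV : IsLimitWord v V)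
    (n p : ℕ) (hp : V p = 0) :
    ∃ s, s ≤ p ∧ p < s + (v n).length ∧ ∀ k, k < (v n).length → V (s + k) = V k := by
  have hlen : p < (v (n + p)).length := by
    have := rankOne_lt_length hv (n + p)
    omega
  obtain ⟨b, c, hw, hb, hc⟩ := rankOne_coveredBy hv n p p (by rw [limitWord_getElem? hV hlen, hp])
  refine ⟨b.length, hb, hc, fun k hk => ?_⟩
  have hk' : b.length + k < (v (n + p)).length := by
    rw [hw]; simp only [List.length_append]; omega
  have h₁ := limitWord_getElem? hV hk'
  rw [hw, List.append_assoc, List.getElem?_append_right (by omega), Nat.add_sub_cancel_left,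
    List.getElem?_append_left hk, limitWord_getElem? hV hk] at h₁
  exact (Option.some.inj h₁).symm

lemma limit_zero (hv : IsRankOneSeq q a v) {V : ℕ → Fin 2} (hV : IsLimitWord v V) :
    V 0 = 0 := by
  have h := limitWord_getElem? hV (n := 0) (k := 0) (by simp [hv.2.1])
  simpa [hv.2.1] using h.symm

lemma limit_last_zero (hv : IsRankOneSeq q a v) {V : ℕ → Fin 2} (hV : IsLimitWord v V)
    (n : ℕ) : V ((v n).length - 1) = 0 := by
  have hlen := rankOne_lt_length hv n
  have h := limitWord_getElem? hV (n := n) (k := (v n).length - 1) (by omega)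
  obtain ⟨c, hc⟩ := rankOne_ends_zero hv n
  simpa [hc] using h.symm

lemma dual_eq_limit {V Vs : ℕ → Fin 2} (hV : IsLimitWord v V) (hVs : IsDualLimitWord v Vs)
    {n k : ℕ} (h : k < (v n).length) : Vs k = V ((v n).length - 1 - k) := by
  rw [hVs n k h, hV n ((v n).length - 1 - k) (by omega)]
  congr 2
  omega

/-- A point of `X_V` whose first `0` is at `K` is `z_K`. -/
lemma eq_zWord_of_first_zero (hv : IsRankOneSeq q a v) {V : ℕ → Fin 2} (hV : IsLimitWord v V)
    {x : ℤ → Fin 2} (hx : x ∈ XV V) {K : ℤ} (hK : x K = 0) (hlt : ∀ k < K, x k = 1) :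
    x = zWord V K := by
  funext k
  unfold zWord
  split_ifs with hk
  · exact hlt k hk
  obtain ⟨j, rfl⟩ : ∃ j : ℕ, k = K + j := ⟨(k - K).toNat, by omega⟩
  rw [show (K + (j : ℤ) - K).toNat = j by omega]
  have hj := rankOne_lt_length hv j
  set ℓ := (v j).length with hℓ
  obtain ⟨t, ht⟩ := hx (K - ℓ) (ℓ + ℓ)
  have h0 : V (t + ℓ) = 0 := by
    rw [← ht ℓ (by omega), show K - (ℓ : ℤ) + ℓ = K by ring, hK]
  obtain ⟨s, hs, hs', hcopy⟩ := limit_cover hv hV j (t + ℓ) h0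
  rw [← hℓ] at hs' hcopy
  -- The initial zero of the copy of `v j` at `s` cannot lie in the block of ones at `t`.
  have hst : s = t + ℓ := by
    by_contra hne
    have h1 := ht (s - t) (by omega)
    rw [hlt _ (by omega), show t + (s - t) = s + 0 by omega, hcopy 0 (by omega),
      limit_zero hv hV] at h1
    exact absurd h1 (by decide)
  have h2 := ht (ℓ + j) (by omega)
  rw [show K - (ℓ : ℤ) + ((ℓ + j : ℕ) : ℤ) = K + j by push_cast; ring,
    show t + (ℓ + j) = s + j by omega, hcopy j (by omega)] at h2
  exact h2

/-- A point of `X_V` whose last `0` is at `K` is `z*_K`. -/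
lemma eq_zStarWord_of_last_zero (hv : IsRankOneSeq q a v) {V Vs : ℕ → Fin 2}
    (hV : IsLimitWord v V) (hVs : IsDualLimitWord v Vs)
    {x : ℤ → Fin 2} (hx : x ∈ XV V) {K : ℤ} (hK : x K = 0) (hgt : ∀ k, K < k → x k = 1) :
    x = zStarWord Vs K := by
  funext k
  unfold zStarWord
  split_ifs with hk
  · exact hgt k hk
  obtain ⟨j, rfl⟩ : ∃ j : ℕ, k = K - j := ⟨(K - k).toNat, by omega⟩
  rw [show (K - (K - (j : ℤ))).toNat = j by omega]
  have hj := rankOne_lt_length hv j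
  rw [dual_eq_limit hV hVs hj]
  have hlast := limit_last_zero hv hV j
  set ℓ := (v j).length with hℓ
  obtain ⟨t, ht⟩ := hx (K - ℓ) (ℓ + ℓ)
  have h0 : V (t + ℓ) = 0 := by
    rw [← ht ℓ (by omega), show K - (ℓ : ℤ) + ℓ = K by ring, hK]
  obtain ⟨s, hs, hs', hcopy⟩ := limit_cover hv hV j (t + ℓ) h0
  rw [← hℓ] at hs' hcopy
  -- The final zero of the copy of `v j` cannot lie in the block of ones after `t + ℓ`.
  have hst : s + (ℓ - 1) = t + ℓ := by
    by_contra hne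
    have h1 := ht (s + (ℓ - 1) - t) (by omega)
    rw [hgt _ (by omega), show t + (s + (ℓ - 1) - t) = s + (ℓ - 1) by omega,
      hcopy (ℓ - 1) (by omega), hlast] at h1
    exact absurd h1 (by decide)
  have h2 := ht (ℓ - j) (by omega)
  rw [show K - (ℓ : ℤ) + ((ℓ - j : ℕ) : ℤ) = K - j by omega,
    show t + (ℓ - j) = s + (ℓ - 1 - j) by omega, hcopy (ℓ - 1 - j) (by omega)] at h2
  exact h2

end RankOne

/-- Let `(X_V, T)` be a rank-one subshift with unbounded spacer parameter.  An
element `x ∈ X_V` contains a one-sided infinite string of `1`s if and only if `x`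
belongs to `S = {1^ℤ} ∪ {z_K : K ∈ ℤ} ∪ {z*_K : K ∈ ℤ}`. -/
theorem infinite_run_of_ones_iff
    (q : ℕ → ℕ) (a : ℕ → ℕ → ℕ) (v : ℕ → List (Fin 2)) (hv : IsRankOneSeq q a v)
    (hubdd : UnboundedSpacer q a)
    (V : ℕ → Fin 2) (hV : IsLimitWord v V)
    (Vs : ℕ → Fin 2) (hVs : IsDualLimitWord v Vs) :
    ∀ x ∈ XV V,
      ((∃ K : ℤ, ∀ k : ℤ, K ≤ k → x k = 1) ∨ (∃ K : ℤ, ∀ k : ℤ, k ≤ K → x k = 1)) ↔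
        (x = (fun _ : ℤ => (1 : Fin 2)) ∨
          (∃ K : ℤ, x = zWord V K) ∨ (∃ K : ℤ, x = zStarWord Vs K)) := by
 
  have hbin : ∀ b : Fin 2, b ≠ 1 → b = 0 := by decide
  intro x hx
  constructor
  · intro h
    by_cases hone : ∀ k, x k = 1
    · exact Or.inl (funext hone)
    push Not at hone
    obtain ⟨k₀, hk₀⟩ := hone
    rcases h with ⟨K, hK⟩ | ⟨K, hK⟩
    · obtain ⟨M, hM, hmax⟩ := Int.exists_greatest_of_bdd (P := fun k => x k ≠ 1)
        ⟨K, fun z hz => by by_contra hlt; exact hz (hK z (by omega))⟩ ⟨k₀, hk₀⟩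
      refine Or.inr (Or.inr ⟨M, eq_zStarWord_of_last_zero hv hV hVs hx (hbin _ hM) ?_⟩)
      intro k hk
      by_contra hne
      exact absurd (hmax k hne) (by omega)
    · obtain ⟨M, hM, hmin⟩ := Int.exists_least_of_bdd (P := fun k => x k ≠ 1)
        ⟨K, fun z hz => by by_contra hlt; exact hz (hK z (by omega))⟩ ⟨k₀, hk₀⟩
      refine Or.inr (Or.inl ⟨M, eq_zWord_of_first_zero hv hV hx (hbin _ hM) ?_⟩)
      intro k hk
      by_contra hne
      exact absurd (hmin k hne) (by omega)
  · rintro (rfl | ⟨K, rfl⟩ | ⟨K, rfl⟩)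
    · exact Or.inl ⟨0, fun _ _ => rfl⟩
    · exact Or.inr ⟨K - 1, fun k hk => if_pos (by omega)⟩
    · exact Or.inl ⟨K + 1, fun k hk => if_pos (by omega)⟩
end
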